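/- arXiv:2108.02367 — 5 statements merged into one kernel-verified Lean document; each statement's English description precedes it below -/
import Mathlib

section
/- For every real p > 1, every φ ∈ {0, π/4, π/2, 3π/4, π} and every θ ∈ [0, π], the two arcs of C_p swept clockwise and counterclockwise from ρ_p(φ) through angle θ have equal ℓ_p arc length: ∫_0^θ ‖ρ_p′(φ+t)‖_p dt = ∫_0^θ ‖ρ_p′(φ−t)‖_p dt (the integrands are defined off the finitely many quadrant-boundary angles). -/
open Real MeasureTheory intervalIntegral

/-- The ℓ_p norm of a point of ℝ². -/
noncomputable def lpN (p : ℝ) (z : ℝ × ℝ) : ℝ := (|z.1| ^ p + |z.2| ^ p) ^ (1 / p)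

/-- The normalization factor `N_p(φ) = (|sin φ|^p + |cos φ|^p)^{1/p}`. -/
noncomputable def Np (p φ : ℝ) : ℝ := (|Real.sin φ| ^ p + |Real.cos φ| ^ p) ^ (1 / p)

/-- The parameterization `ρ_p(φ) = (cos φ, sin φ)/N_p(φ)` of the ℓ_p unit circle. -/
noncomputable def rho (p φ : ℝ) : ℝ × ℝ := (Real.cos φ / Np p φ, Real.sin φ / Np p φ)

/-- The ℓ_p speed `‖ρ_p′(t)‖_p` of the parameterization `ρ_p`. -/
noncomputable def speed (p t : ℝ) : ℝ := lpN p (deriv (rho p) t)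

/-! A reflection of the parameter that acts on the curve as a linear `ℓ_p` isometry preserves the
speed. The two reflections `t ↦ -t` and `t ↦ π / 2 - t` act as `(x, y) ↦ (x, -y)` and
`(x, y) ↦ (y, x)`, so the speed is even and `π / 2`-periodic, hence symmetric about every multiple
of `π / 4`, and the two integrands agree pointwise. -/

-- Invertibility of `L` is what makes this hold also where `γ` is not differentiable.
theorem deriv_const_sub_of_equivariant {𝕜 E : Type*} [NontriviallyNormedField 𝕜]
    [NormedAddCommGroup E] [NormedSpace 𝕜 E] {γ : 𝕜 → E} {c : 𝕜} (L : E ≃L[𝕜] E)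
    (hγ : ∀ t, γ (c - t) = L (γ t)) (t : 𝕜) : deriv γ (c - t) = -L (deriv γ t) := by
  have deriv_L_comp : deriv (L ∘ γ) t = L (deriv γ t) := by
    simp only [← fderiv_apply_one_eq_deriv, L.comp_fderiv, ContinuousLinearMap.comp_apply,
      ContinuousLinearEquiv.coe_coe]
  rw [← deriv_L_comp, ← funext (g := L ∘ γ) hγ, deriv_comp_const_sub, neg_neg]

theorem apply_add_eq_apply_sub_of_even_of_periodic {G β : Type*} [AddCommGroup G] {f : G → β}
    {T a : G} {k : ℤ} (heven : Function.Even f) (hper : Function.Periodic f T)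
    (ha : 2 • a = k • T) (t : G) : f (a + t) = f (a - t) :=
  calc
    f (a + t) = f (t - a + k • T) := by rw [← ha, two_nsmul]; congr 1; abel
    _ = f (t - a) := hper.zsmul k _
    _ = f (a - t) := by rw [← heven, neg_sub]

theorem lpN_neg (p : ℝ) (z : ℝ × ℝ) : lpN p (-z) = lpN p z := by
  simp only [lpN, Prod.fst_neg, Prod.snd_neg, abs_neg]

theorem lpN_neg_snd (p x y : ℝ) : lpN p (x, -y) = lpN p (x, y) := by
  simp only [lpN, abs_neg]

theorem lpN_swap (p : ℝ) (z : ℝ × ℝ) : lpN p z.swap = lpN p z := by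
  simp only [lpN, Prod.fst_swap, Prod.snd_swap, add_comm]

theorem Np_neg (p φ : ℝ) : Np p (-φ) = Np p φ := by
  simp only [Np, Real.sin_neg, Real.cos_neg, abs_neg]

theorem Np_pi_div_two_sub (p φ : ℝ) : Np p (π / 2 - φ) = Np p φ := by
  simp only [Np, Real.sin_pi_div_two_sub, Real.cos_pi_div_two_sub, add_comm]

theorem rho_neg (p φ : ℝ) : rho p (-φ) = ((rho p φ).1, -(rho p φ).2) := by
  simp only [rho, Np_neg, Real.sin_neg, Real.cos_neg, neg_div]

theorem rho_pi_div_two_sub (p φ : ℝ) : rho p (π / 2 - φ) = (rho p φ).swap := by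
  simp only [rho, Np_pi_div_two_sub, Real.sin_pi_div_two_sub, Real.cos_pi_div_two_sub,
    Prod.swap_prod_mk]

theorem speed_const_sub_of_equivariant {p c : ℝ} (L : (ℝ × ℝ) ≃L[ℝ] (ℝ × ℝ))
    (hL : ∀ z, lpN p (L z) = lpN p z) (hrho : ∀ t, rho p (c - t) = L (rho p t)) (t : ℝ) :
    speed p (c - t) = speed p t := by
  rw [speed, deriv_const_sub_of_equivariant L hrho, lpN_neg, hL, speed]

theorem speed_even (p : ℝ) : Function.Even (speed p) := fun t => by
  rw [← zero_sub]
  exact speed_const_sub_of_equivariant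
    ((ContinuousLinearEquiv.refl ℝ ℝ).prodCongr (ContinuousLinearEquiv.neg ℝ))
    (fun z => lpN_neg_snd p z.1 z.2) (fun s => by rw [zero_sub]; exact rho_neg p s) t

theorem speed_pi_div_two_sub (p t : ℝ) : speed p (π / 2 - t) = speed p t :=
  speed_const_sub_of_equivariant (ContinuousLinearEquiv.prodComm ℝ ℝ ℝ)
    (lpN_swap p) (rho_pi_div_two_sub p) t

theorem speed_periodic (p : ℝ) : Function.Periodic (speed p) (π / 2) := fun t => by
  rw [← speed_even p t, ← speed_pi_div_two_sub p (-t), sub_neg_eq_add, add_comm]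

theorem speed_add_eq_speed_sub (p : ℝ) (k : ℤ) (t : ℝ) :
    speed p (k * (π / 4) + t) = speed p (k * (π / 4) - t) :=
  apply_add_eq_apply_sub_of_even_of_periodic (k := k) (speed_even p) (speed_periodic p)
    (by rw [nsmul_eq_mul, zsmul_eq_mul]; push_cast; ring) t

theorem exists_eq_int_mul_pi_div_four_of_mem {φ : ℝ}
    (hφ : φ ∈ ({0, π / 4, π / 2, 3 * π / 4, π} : Set ℝ)) : ∃ k : ℤ, φ = k * (π / 4) := by
  rcases hφ with rfl | rfl | rfl | rfl | rfl
  exacts [⟨0, by simp⟩, ⟨1, by simp⟩, ⟨2, by push_cast; ring⟩, ⟨3, by push_cast; ring⟩,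
    ⟨4, by push_cast; ring⟩]

theorem stmt_1_general (p : ℝ) (k : ℤ) (θ : ℝ) :
    ∫ t in (0 : ℝ)..θ, speed p (k * (π / 4) + t) = ∫ t in (0 : ℝ)..θ, speed p (k * (π / 4) - t) :=
  integral_congr fun t _ => speed_add_eq_speed_sub p k t

/-- For `p > 1`, `φ ∈ {0, π/4, π/2, 3π/4, π}` and `θ ∈ [0, π]`, the arcs swept
clockwise and counterclockwise from `ρ_p(φ)` through angle `θ` have equal ℓ_p length. -/
theorem stmt_1 (p : ℝ) (hp : 1 < p)
    (φ : ℝ) (hφ : φ ∈ ({0, Real.pi / 4, Real.pi / 2, 3 * Real.pi / 4, Real.pi} : Set ℝ))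
    (θ : ℝ) (hθ : θ ∈ Set.Icc 0 Real.pi) :
    ∫ t in (0 : ℝ)..θ, speed p (φ + t) = ∫ t in (0 : ℝ)..θ, speed p (φ - t) := by
  obtain ⟨k, rfl⟩ := exists_eq_int_mul_pi_div_four_of_mem hφ
  exact stmt_1_general p k θ
end

section
/- Define γ₁ : [0,4] → ℝ² by γ₁(τ) = (1 − τ/2, τ/2) for τ ∈ [0,2] and γ₁(τ) = (−(τ−2)/2, 1 − (τ−2)/2) for τ ∈ [2,4], and let γ₂(τ) be the reflection of γ₁(τ) across the x-axis. Then γ₁ and γ₂ are unit-speed curves on C₁ with respect to the ℓ₁ norm, ‖γ₁(τ) − γ₂(τ)‖₁ = τ for τ ∈ [0,2] and ‖γ₁(τ) − γ₂(τ)‖₁ = 4 − τ for τ ∈ [2,4], and consequently max over τ ∈ [0,4] of (1 + τ + ‖γ₁(τ) − γ₂(τ)‖₁) equals 5, the maximum being attained for every τ ∈ [2,4]. (This is the worst-case cost of the wireless evacuation algorithm Wireless-Search₁(0) on the ℓ₁ unit disk.) -/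
open Real MeasureTheory intervalIntegral

/-- The ℓ_p unit circle. -/
def Cp (p : ℝ) : Set (ℝ × ℝ) := {z | lpN p z = 1}

/-- Trajectory of robot #1 in Wireless-Search₁(0). -/
noncomputable def gamma1 : ℝ → ℝ × ℝ := fun τ =>
  if τ ≤ 2 then (1 - τ / 2, τ / 2) else (-(τ - 2) / 2, 1 - (τ - 2) / 2)

/-- Trajectory of robot #2: the reflection of `gamma1` across the x-axis. -/
noncomputable def gamma2 : ℝ → ℝ × ℝ := fun τ => ((gamma1 τ).1, -(gamma1 τ).2)

/-! Both legs of `gamma1` lie on one curve, `x ↦ (x, 1 - |x|)`, traversed with abscissa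
`x = 1 - τ / 2`. The robots are mirror images, so the segment between them is vertical and has
length `2 * (1 - |x|) = 2 - |τ - 2|`. The cost is therefore `5 + ((τ - 2) - |τ - 2|)`, which is at
most `5`, with equality when `2 ≤ τ`. -/

theorem abs_sign_eq_one {R : Type*} [Ring R] [LinearOrder R] [IsStrictOrderedRing R] {x : R}
    (hx : x ≠ 0) : |(SignType.sign x : R)| = 1 := by
  rcases hx.lt_or_gt with hx | hx <;> simp [hx]

theorem deriv_continuousLinearEquiv_comp {𝕜 E F : Type*} [NontriviallyNormedField 𝕜]
    [NormedAddCommGroup E] [NormedSpace 𝕜 E] [NormedAddCommGroup F] [NormedSpace 𝕜 F]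
    (L : E ≃L[𝕜] F) (γ : 𝕜 → E) (t : 𝕜) : deriv (L ∘ γ) t = L (deriv γ t) := by
  simp only [← fderiv_apply_one_eq_deriv, L.comp_fderiv, ContinuousLinearMap.comp_apply,
    ContinuousLinearEquiv.coe_coe]

theorem lpN_one (z : ℝ × ℝ) : lpN 1 z = |z.1| + |z.2| := by
  simp [lpN]

/-- Reflection of the plane across the x-axis, as a continuous linear equivalence so that it
commutes with `deriv`. -/
noncomputable def reflectX : (ℝ × ℝ) ≃L[ℝ] ℝ × ℝ :=
  (ContinuousLinearEquiv.refl ℝ ℝ).prodCongr (ContinuousLinearEquiv.neg ℝ)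

theorem reflectX_apply (z : ℝ × ℝ) : reflectX z = (z.1, -z.2) := rfl

theorem lpN_reflectX (p : ℝ) (z : ℝ × ℝ) : lpN p (reflectX z) = lpN p z := by
  simp only [lpN, reflectX_apply, abs_neg]

theorem reflectX_mem_Cp {p : ℝ} {z : ℝ × ℝ} (hz : z ∈ Cp p) : reflectX z ∈ Cp p :=
  (lpN_reflectX p z).trans hz

theorem lpN_sub_reflectX {p : ℝ} (hp : p ≠ 0) (z : ℝ × ℝ) :
    lpN p (z - reflectX z) = 2 * |z.2| := by
  have vertical : z - reflectX z = (0, 2 * z.2) := by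
    ext <;> simp [reflectX_apply, two_mul]
  rw [vertical, lpN, abs_zero, zero_rpow hp, zero_add, one_div, rpow_rpow_inv (abs_nonneg _) hp,
    abs_mul, abs_two]

/-- The graph of `1 - |x|`; over `[-1, 1]` it parametrizes the upper half of the ℓ₁ unit circle by
its abscissa. -/
def upperArc (x : ℝ) : ℝ × ℝ := (x, 1 - |x|)

theorem upperArc_mem_Cp_one {x : ℝ} (hx : |x| ≤ 1) : upperArc x ∈ Cp 1 := by
  change lpN 1 (upperArc x) = 1
  rw [lpN_one, upperArc, abs_of_nonneg (sub_nonneg.mpr hx), add_sub_cancel]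

theorem hasDerivAt_upperArc {x : ℝ} (hx : x ≠ 0) :
    HasDerivAt upperArc (1, -(SignType.sign x : ℝ)) x :=
  (hasDerivAt_id x).prodMk ((hasDerivAt_abs hx).const_sub 1)

theorem gamma1_eq_upperArc (τ : ℝ) : gamma1 τ = upperArc (1 - τ / 2) := by
  rcases le_or_gt τ 2 with hτ | hτ
  · rw [gamma1, if_pos hτ, upperArc, abs_of_nonneg (by linarith), sub_sub_cancel]
  · rw [gamma1, if_neg hτ.not_ge, upperArc, abs_of_neg (by linarith)]
    ext <;> ring

theorem gamma2_eq_reflectX_comp : gamma2 = reflectX ∘ gamma1 := rfl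

theorem abs_one_sub_half_le_one {τ : ℝ} (hτ : τ ∈ Set.Icc 0 4) : |1 - τ / 2| ≤ 1 :=
  abs_le.mpr ⟨by linarith [hτ.2], by linarith [hτ.1]⟩

theorem gamma1_mem_Cp_one {τ : ℝ} (hτ : τ ∈ Set.Icc 0 4) : gamma1 τ ∈ Cp 1 :=
  gamma1_eq_upperArc τ ▸ upperArc_mem_Cp_one (abs_one_sub_half_le_one hτ)

theorem hasDerivAt_gamma1 {τ : ℝ} (hτ : τ ≠ 2) :
    HasDerivAt gamma1 (-(1 / 2 : ℝ) • (1, -(SignType.sign (1 - τ / 2) : ℝ))) τ := by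
  have abscissa_ne_zero : 1 - τ / 2 ≠ 0 := fun h => hτ (by linarith)
  have hasDerivAt_abscissa : HasDerivAt (fun t : ℝ => 1 - t / 2) (-(1 / 2)) τ :=
    ((hasDerivAt_id τ).div_const 2).const_sub 1
  rw [funext gamma1_eq_upperArc]
  exact (hasDerivAt_upperArc abscissa_ne_zero).scomp τ hasDerivAt_abscissa

theorem lpN_one_deriv_gamma1 {τ : ℝ} (hτ : τ ≠ 2) : lpN 1 (deriv gamma1 τ) = 1 := by
  have abs_sign : |(SignType.sign (1 - τ / 2) : ℝ)| = 1 :=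
    abs_sign_eq_one fun h => hτ (by linarith)
  rw [(hasDerivAt_gamma1 hτ).deriv, lpN_one]
  simp only [Prod.smul_mk, smul_eq_mul, abs_mul, abs_neg, abs_sign]
  norm_num

theorem lpN_deriv_gamma2 (p τ : ℝ) : lpN p (deriv gamma2 τ) = lpN p (deriv gamma1 τ) := by
  rw [gamma2_eq_reflectX_comp, deriv_continuousLinearEquiv_comp, lpN_reflectX]

theorem lpN_gamma1_sub_gamma2 {p τ : ℝ} (hp : p ≠ 0) (hτ : τ ∈ Set.Icc 0 4) :
    lpN p (gamma1 τ - gamma2 τ) = 2 - |τ - 2| := by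
  have abs_abscissa : |1 - τ / 2| = |τ - 2| / 2 := by
    rw [show 1 - τ / 2 = -((τ - 2) / 2) by ring, abs_neg, abs_div, abs_two]
  calc lpN p (gamma1 τ - gamma2 τ) = 2 * |(gamma1 τ).2| := lpN_sub_reflectX hp _
    _ = 2 * (1 - |1 - τ / 2|) := by
      rw [gamma1_eq_upperArc, upperArc,
        abs_of_nonneg (sub_nonneg.mpr (abs_one_sub_half_le_one hτ))]
    _ = 2 - |τ - 2| := by rw [abs_abscissa]; ring

/-- `γ₁` and `γ₂` are unit-speed curves on `C₁` (w.r.t. ℓ₁), their ℓ₁ distance is `τ`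
on `[0,2]` and `4 − τ` on `[2,4]`, and the worst-case evacuation cost
`max_{τ ∈ [0,4]} (1 + τ + ‖γ₁(τ) − γ₂(τ)‖₁)` equals `5`, attained for every `τ ∈ [2,4]`. -/
theorem stmt_3 :
    (∀ τ ∈ Set.Icc (0 : ℝ) 4, gamma1 τ ∈ Cp 1 ∧ gamma2 τ ∈ Cp 1) ∧
    (∀ τ ∈ Set.Ioo (0 : ℝ) 2 ∪ Set.Ioo (2 : ℝ) 4,
      lpN 1 (deriv gamma1 τ) = 1 ∧ lpN 1 (deriv gamma2 τ) = 1) ∧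
    (∀ τ ∈ Set.Icc (0 : ℝ) 2, lpN 1 (gamma1 τ - gamma2 τ) = τ) ∧
    (∀ τ ∈ Set.Icc (2 : ℝ) 4, lpN 1 (gamma1 τ - gamma2 τ) = 4 - τ) ∧
    IsGreatest ((fun τ => 1 + τ + lpN 1 (gamma1 τ - gamma2 τ)) '' Set.Icc (0 : ℝ) 4) 5 ∧
    (∀ τ ∈ Set.Icc (2 : ℝ) 4, 1 + τ + lpN 1 (gamma1 τ - gamma2 τ) = 5) := by
  have distance {τ : ℝ} (hτ : τ ∈ Set.Icc 0 4) : lpN 1 (gamma1 τ - gamma2 τ) = 2 - |τ - 2| :=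
    lpN_gamma1_sub_gamma2 one_ne_zero hτ
  have distance_late : ∀ τ ∈ Set.Icc (2 : ℝ) 4, lpN 1 (gamma1 τ - gamma2 τ) = 4 - τ := by
    intro τ hτ
    rw [distance ⟨by linarith [hτ.1], hτ.2⟩, abs_of_nonneg (sub_nonneg.mpr hτ.1)]
    ring
  have cost_late : ∀ τ ∈ Set.Icc (2 : ℝ) 4, 1 + τ + lpN 1 (gamma1 τ - gamma2 τ) = 5 := by
    intro τ hτ
    rw [distance_late τ hτ]
    ring
  refine ⟨fun τ hτ => ⟨gamma1_mem_Cp_one hτ, reflectX_mem_Cp (gamma1_mem_Cp_one hτ)⟩,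
    fun τ hτ => ?speed, fun τ hτ => ?distance_early, distance_late,
    ⟨⟨2, by norm_num, cost_late 2 (by norm_num)⟩, ?cost_le⟩, cost_late⟩
  case speed =>
    have hτ_ne : τ ≠ 2 := hτ.elim (fun h => h.2.ne) (fun h => h.1.ne')
    exact ⟨lpN_one_deriv_gamma1 hτ_ne, (lpN_deriv_gamma2 1 τ).trans (lpN_one_deriv_gamma1 hτ_ne)⟩
  case distance_early =>
    rw [distance ⟨hτ.1, by linarith [hτ.2]⟩, abs_of_nonpos (sub_nonpos.mpr hτ.2)]
    ring
  case cost_le =>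
    rintro _ ⟨τ, hτ, rfl⟩
    linarith [distance hτ, le_abs_self (τ - 2)]
end

section
/- For every real p ∈ (1,2], the function f(s) = 1 + π_p/2 + ∫_0^s (z^{p²−p}(1−z^p)^{1−p} + 1)^{1/p} dz + 2(1−s^p)^{1/p}, defined for s ∈ [0,1], attains its maximum over [0,1] at s_p = ((2^p − 1)^{1/(p−1)} + 1)^{−1/p}, and s_p is the unique zero of f′ in (0,1). -/
open Real MeasureTheory intervalIntegral

/-- `π_p`, half the ℓ_p-circumference of the ℓ_p unit circle. -/
noncomputable def piP (p : ℝ) : ℝ := 2 * ∫ t in (0 : ℝ)..(Real.pi / 2), speed p t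

/-!
The integrand is `(D + 1) ^ (1 / p)`, where `D` is the `p`-th power of the absolute slope of the arc
`y = (1 - s ^ p) ^ (1 / p)`, so `f' = (D + 1) ^ (1 / p) - 2 * D ^ (1 / p)` is positive,
zero or negative as `D` is less than, equal to or greater than `1 / (2 ^ p - 1)`. Since
`D = (s ^ p / (1 - s ^ p)) ^ (p - 1)` increases strictly from `0` to `∞`, it crosses this threshold
exactly once, at `s_p`. The weight `2` may be replaced by any `l > 1`.
-/

/-- The height over `s ∈ [0, 1]` of the arc of the ℓ_p unit circle in the first quadrant. -/
noncomputable def arcHeight (p s : ℝ) : ℝ := (1 - s ^ p) ^ (1 / p)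

/-- The `p`-th power of the absolute slope of `arcHeight p` at `s`. -/
noncomputable def arcSlopePow (p s : ℝ) : ℝ := s ^ (p ^ 2 - p) * (1 - s ^ p) ^ (1 - p)

/-- The ℓ_p speed of the parameterization of the arc by its abscissa, that is, the ℓ_p norm of the
vector `(1, deriv (arcHeight p) s)`. -/
noncomputable def arcSpeed (p s : ℝ) : ℝ := (arcSlopePow p s + 1) ^ (1 / p)

/-- The evacuation cost with the constant term `c` and the factor of the height of the arc, which is
`2` in `stmt_7`, left as parameters. -/
noncomputable def evacuationCost (p l c s : ℝ) : ℝ :=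
  c + (∫ z in (0 : ℝ)..s, arcSpeed p z) + l * arcHeight p s

/-- The maximizer of `evacuationCost p l c` for `p, l > 1`; for `l = 2` it is the number `s_p` of
`stmt_7`. -/
noncomputable def costMaximizer (p l : ℝ) : ℝ := ((l ^ p - 1) ^ (1 / (p - 1)) + 1) ^ (-(1 / p))

section

variable {p l s : ℝ}

lemma one_sub_rpow_pos (hp : 0 < p) (hs : s ∈ Set.Ico (0 : ℝ) 1) : 0 < 1 - s ^ p :=
  sub_pos.2 (rpow_lt_one hs.1 hs.2 hp)

lemma arcSlopePow_nonneg (hp : 0 < p) (hs : s ∈ Set.Ico (0 : ℝ) 1) : 0 ≤ arcSlopePow p s :=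
  mul_nonneg (rpow_nonneg hs.1 _) (rpow_nonneg (one_sub_rpow_pos hp hs).le _)

lemma arcSlopePow_eq_div_rpow (hp : 0 < p) (hs : s ∈ Set.Ico (0 : ℝ) 1) :
    arcSlopePow p s = (s ^ p / (1 - s ^ p)) ^ (p - 1) := by
  have h := (one_sub_rpow_pos hp hs).le
  rw [arcSlopePow, div_rpow (rpow_nonneg hs.1 p) h, ← rpow_mul hs.1, div_eq_mul_inv,
    ← rpow_neg h, neg_sub]
  ring_nf

lemma strictMonoOn_arcSlopePow (hp : 1 < p) : StrictMonoOn (arcSlopePow p) (Set.Ico 0 1) := by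
  intro s hs t ht hst
  have hp₀ : 0 < p := zero_lt_one.trans hp
  have hpow : s ^ p < t ^ p := rpow_lt_rpow hs.1 hst hp₀
  have hs' := one_sub_rpow_pos hp₀ hs
  have ht' := one_sub_rpow_pos hp₀ ht
  rw [arcSlopePow_eq_div_rpow hp₀ hs, arcSlopePow_eq_div_rpow hp₀ ht]
  have hs₀ := rpow_nonneg hs.1 p
  exact rpow_lt_rpow (by positivity)
    (div_lt_div₀ hpow (by linarith) (by linarith) ht') (sub_pos.2 hp)

lemma arcSlopePow_rpow_one_div (hp : 0 < p) (hs : s ∈ Set.Ico (0 : ℝ) 1) :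
    arcSlopePow p s ^ (1 / p) = s ^ (p - 1) * (1 - s ^ p) ^ (1 / p - 1) := by
  have h := (one_sub_rpow_pos hp hs).le
  rw [arcSlopePow, mul_rpow (rpow_nonneg hs.1 _) (rpow_nonneg h _), ← rpow_mul hs.1, ← rpow_mul h]
  congr 2 <;> field_simp

lemma continuous_arcHeight (hp : 0 < p) : Continuous (arcHeight p) :=
  (continuous_const.sub (continuous_rpow_const hp.le)).rpow_const fun _ => Or.inr (by positivity)

lemma hasDerivAt_arcHeight (hp : 0 < p) (hs : s ∈ Set.Ioo (0 : ℝ) 1) :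
    HasDerivAt (arcHeight p) (-arcSlopePow p s ^ (1 / p)) s := by
  have hs' := Set.Ioo_subset_Ico_self hs
  have hbase : HasDerivAt (fun t : ℝ => 1 - t ^ p) (-(p * s ^ (p - 1))) s :=
    (hasDerivAt_rpow_const (Or.inl hs.1.ne')).const_sub 1
  refine (hbase.rpow_const (Or.inl (one_sub_rpow_pos hp hs').ne')).congr_deriv ?_
  rw [arcSlopePow_rpow_one_div hp hs']
  field_simp

lemma measurable_arcSpeed : Measurable (arcSpeed p) := by
  unfold arcSpeed arcSlopePow
  fun_prop

lemma continuousAt_arcSpeed (hp : 0 < p) (hs : s ∈ Set.Ioo (0 : ℝ) 1) :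
    ContinuousAt (arcSpeed p) s := by
  have hs' := Set.Ioo_subset_Ico_self hs
  have hbase : 1 - s ^ p ≠ 0 := (one_sub_rpow_pos hp hs').ne'
  have hsum : arcSlopePow p s + 1 ≠ 0 := by linarith [arcSlopePow_nonneg hp hs']
  have hrpow (a : ℝ) : ContinuousAt (fun t : ℝ => t ^ a) s :=
    continuousAt_rpow_const _ _ (Or.inl hs.1.ne')
  have hslope : ContinuousAt (arcSlopePow p) s :=
    (hrpow _).mul ((continuousAt_const.sub (hrpow p)).rpow_const (Or.inl hbase))
  exact (hslope.add continuousAt_const).rpow_const (Or.inl hsum)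

lemma arcSpeed_le (hp : 1 ≤ p) (hs : s ∈ Set.Ico (0 : ℝ) 1) :
    arcSpeed p s ≤ arcSlopePow p s ^ (1 / p) + 1 := by
  have hp₀ : 0 < p := zero_lt_one.trans_le hp
  simpa only [arcSpeed, one_rpow] using
    rpow_add_le_add_rpow (arcSlopePow_nonneg hp₀ hs) zero_le_one (by positivity)
      ((div_le_one hp₀).2 hp)

lemma integrableOn_arcSlopePow_rpow_one_div (hp : 0 < p) :
    IntegrableOn (fun s => arcSlopePow p s ^ (1 / p)) (Set.Ioc 0 1) :=
  integrableOn_deriv_of_nonneg (continuous_arcHeight hp).neg.continuousOn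
    (fun s hs => by simpa only [neg_neg] using (hasDerivAt_arcHeight hp hs).neg)
    fun s hs => rpow_nonneg (arcSlopePow_nonneg hp (Set.Ioo_subset_Ico_self hs)) _

/- The integrand is unbounded near `1`; it is dominated by the absolute slope plus one, and the
slope is integrable up to `1` because it has constant sign and a continuous antiderivative. -/
lemma intervalIntegrable_arcSpeed (hp : 1 ≤ p) : IntervalIntegrable (arcSpeed p) volume 0 1 := by
  have hp₀ : 0 < p := zero_lt_one.trans_le hp
  have hdom : IntegrableOn (fun s => arcSlopePow p s ^ (1 / p) + 1) (Set.Ioo 0 1) :=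
    ((integrableOn_arcSlopePow_rpow_one_div hp₀).mono_set Set.Ioo_subset_Ioc_self).add
      (integrableOn_const (by simp))
  rw [intervalIntegrable_iff_integrableOn_Ioo_of_le zero_le_one]
  refine hdom.mono' measurable_arcSpeed.aestronglyMeasurable
    (ae_restrict_of_forall_mem measurableSet_Ioo fun s hs => ?_)
  have hs' := Set.Ioo_subset_Ico_self hs
  have hslope := arcSlopePow_nonneg hp₀ hs'
  rw [arcSpeed, norm_of_nonneg (by positivity)]
  exact arcSpeed_le hp hs'

lemma continuousOn_evacuationCost (hp : 1 ≤ p) (c : ℝ) :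
    ContinuousOn (evacuationCost p l c) (Set.Icc 0 1) := by
  have hint : ContinuousOn (fun s => ∫ z in (0 : ℝ)..s, arcSpeed p z) (Set.Icc 0 1) := by
    simpa only [Set.uIcc_of_le zero_le_one] using
      continuousOn_primitive_interval' (intervalIntegrable_arcSpeed hp) Set.left_mem_uIcc
  exact (continuousOn_const.add hint).add
    (continuous_const.mul (continuous_arcHeight (by linarith))).continuousOn

lemma hasDerivAt_evacuationCost (hp : 1 ≤ p) (c : ℝ) (hs : s ∈ Set.Ioo (0 : ℝ) 1) :
    HasDerivAt (evacuationCost p l c)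
      ((arcSlopePow p s + 1) ^ (1 / p) - l * arcSlopePow p s ^ (1 / p)) s := by
  have hp₀ : 0 < p := zero_lt_one.trans_le hp
  have hsub : Set.uIcc 0 s ⊆ Set.uIcc 0 1 := by
    rw [Set.uIcc_of_le hs.1.le, Set.uIcc_of_le zero_le_one]
    exact Set.Icc_subset_Icc_right hs.2.le
  have hint : HasDerivAt (fun u => ∫ z in (0 : ℝ)..u, arcSpeed p z) (arcSpeed p s) s :=
    integral_hasDerivAt_right ((intervalIntegrable_arcSpeed hp).mono_set hsub)
      measurable_arcSpeed.stronglyMeasurable.stronglyMeasurableAtFilter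
      (continuousAt_arcSpeed hp₀ hs)
  refine ((hint.const_add c).add ((hasDerivAt_arcHeight hp₀ hs).const_mul l)).congr_deriv ?_
  rw [arcSpeed]
  ring

lemma rpow_sub_one_pos (hp : 0 < p) (hl : 1 < l) : 0 < l ^ p - 1 :=
  sub_pos.2 (one_lt_rpow hl hp)

lemma costMaximizer_mem_Ioo (hp : 0 < p) (hl : 1 < l) :
    costMaximizer p l ∈ Set.Ioo (0 : ℝ) 1 := by
  have hK : 0 < (l ^ p - 1) ^ (1 / (p - 1)) := rpow_pos_of_pos (rpow_sub_one_pos hp hl) _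
  exact ⟨rpow_pos_of_pos (by linarith) _,
    rpow_lt_one_of_one_lt_of_neg (by linarith) (neg_lt_zero.2 (by positivity))⟩

lemma arcSlopePow_costMaximizer (hp : 1 < p) (hl : 1 < l) :
    arcSlopePow p (costMaximizer p l) = (l ^ p - 1)⁻¹ := by
  have hp₀ : 0 < p := zero_lt_one.trans hp
  have hl' := rpow_sub_one_pos hp₀ hl
  set K := (l ^ p - 1) ^ (1 / (p - 1)) with hK_def
  have hK : 0 < K := rpow_pos_of_pos hl' _
  have hK_rpow : K ^ (p - 1) = l ^ p - 1 := by
    rw [hK_def, one_div, rpow_inv_rpow hl'.le (sub_pos.2 hp).ne']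
  have hpow : costMaximizer p l ^ p = (K + 1)⁻¹ := by
    rw [costMaximizer, rpow_neg (by positivity), inv_rpow (by positivity), one_div p,
      rpow_inv_rpow (by positivity) hp₀.ne']
  have hratio : costMaximizer p l ^ p / (1 - costMaximizer p l ^ p) = K⁻¹ := by
    have hsub : 1 - (K + 1)⁻¹ = K / (K + 1) := by
      field_simp
      ring
    rw [hpow, hsub]
    field_simp
  rw [arcSlopePow_eq_div_rpow hp₀ (Set.Ioo_subset_Ico_self (costMaximizer_mem_Ioo hp₀ hl)),
    hratio, inv_rpow hK.le, hK_rpow]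

lemma cmp_mul_rpow_one_div_add_one_rpow_one_div {D : ℝ} (hp : 0 < p) (hl : 1 < l) (hD : 0 ≤ D) :
    cmp (l * D ^ (1 / p)) ((D + 1) ^ (1 / p)) = cmp D (l ^ p - 1)⁻¹ := by
  have hl₀ : 0 ≤ l := by linarith
  have hl' := rpow_sub_one_pos hp hl
  calc cmp (l * D ^ (1 / p)) ((D + 1) ^ (1 / p))
      = cmp ((l * D ^ (1 / p)) ^ p) (((D + 1) ^ (1 / p)) ^ p) :=
        ((strictMonoOn_rpow_Ici_of_exponent_pos hp).cmp_map_eq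
          (Set.mem_Ici.2 (by positivity)) (Set.mem_Ici.2 (by positivity))).symm
    _ = cmp (l ^ p * D) (D + 1) := by
        rw [mul_rpow hl₀ (by positivity), one_div, rpow_inv_rpow hD hp.ne',
          rpow_inv_rpow (by positivity) hp.ne']
    _ = cmp ((l ^ p - 1) * D) ((l ^ p - 1) * (l ^ p - 1)⁻¹) := by
        rw [← cmp_sub_zero, ← cmp_sub_zero ((l ^ p - 1) * D), mul_inv_cancel₀ hl'.ne']
        ring_nf
    _ = cmp D (l ^ p - 1)⁻¹ := cmp_mul_pos_left hl' _ _

lemma cmp_zero_deriv_evacuationCost (hp : 1 < p) (hl : 1 < l) (c : ℝ)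
    (hs : s ∈ Set.Ioo (0 : ℝ) 1) :
    cmp 0 (deriv (evacuationCost p l c) s) = cmp s (costMaximizer p l) := by
  have hp₀ : 0 < p := zero_lt_one.trans hp
  have hs' := Set.Ioo_subset_Ico_self hs
  have hm := Set.Ioo_subset_Ico_self (costMaximizer_mem_Ioo hp₀ hl)
  rw [(hasDerivAt_evacuationCost hp.le c hs).deriv,
    ← (strictMonoOn_arcSlopePow hp).cmp_map_eq hs' hm, arcSlopePow_costMaximizer hp hl,
    ← cmp_mul_rpow_one_div_add_one_rpow_one_div hp₀ hl (arcSlopePow_nonneg hp₀ hs'),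
    ← cmp_swap, cmp_sub_zero, cmp_swap]

lemma strictMonoOn_evacuationCost (hp : 1 < p) (hl : 1 < l) (c : ℝ) :
    StrictMonoOn (evacuationCost p l c) (Set.Icc 0 (costMaximizer p l)) := by
  have hm := costMaximizer_mem_Ioo (zero_lt_one.trans hp) hl
  refine strictMonoOn_of_deriv_pos (convex_Icc _ _)
    ((continuousOn_evacuationCost hp.le c).mono (Set.Icc_subset_Icc_right hm.2.le)) fun s hs => ?_
  rw [interior_Icc] at hs
  exact (lt_iff_lt_of_cmp_eq_cmp
    (cmp_zero_deriv_evacuationCost hp hl c ⟨hs.1, hs.2.trans hm.2⟩)).2 hs.2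

lemma strictAntiOn_evacuationCost (hp : 1 < p) (hl : 1 < l) (c : ℝ) :
    StrictAntiOn (evacuationCost p l c) (Set.Icc (costMaximizer p l) 1) := by
  have hm := costMaximizer_mem_Ioo (zero_lt_one.trans hp) hl
  refine strictAntiOn_of_deriv_neg (convex_Icc _ _)
    ((continuousOn_evacuationCost hp.le c).mono (Set.Icc_subset_Icc_left hm.1.le)) fun s hs => ?_
  rw [interior_Icc] at hs
  have hcmp := cmp_zero_deriv_evacuationCost hp hl c ⟨hm.1.trans hs.1, hs.2⟩
  exact (lt_iff_lt_of_cmp_eq_cmp (cmp_eq_cmp_symm.1 hcmp)).2 hs.1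

theorem stmt_7_general (hp : 1 < p) (hl : 1 < l) (c : ℝ) :
    costMaximizer p l ∈ Set.Ioo (0 : ℝ) 1 ∧
    (∀ s ∈ Set.Icc (0 : ℝ) 1, evacuationCost p l c s ≤ evacuationCost p l c (costMaximizer p l)) ∧
    (∀ s ∈ Set.Ioo (0 : ℝ) 1, deriv (evacuationCost p l c) s = 0 ↔ s = costMaximizer p l) := by
  have hm := costMaximizer_mem_Ioo (zero_lt_one.trans hp) hl
  refine ⟨hm, fun s hs => ?_, fun s hs => ?_⟩
  · rcases le_total s (costMaximizer p l) with h | h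
    · exact (strictMonoOn_evacuationCost hp hl c).monotoneOn ⟨hs.1, h⟩ ⟨hm.1.le, le_rfl⟩ h
    · exact (strictAntiOn_evacuationCost hp hl c).antitoneOn ⟨le_rfl, hm.2.le⟩ ⟨h, hs.2⟩ h
  · exact eq_comm.trans (eq_iff_eq_of_cmp_eq_cmp (cmp_zero_deriv_evacuationCost hp hl c hs))

end

/-- For `p ∈ (1,2]`, the evacuation-cost function
`f(s) = 1 + π_p/2 + ∫_0^s (z^{p²−p}(1−z^p)^{1−p} + 1)^{1/p} dz + 2(1−s^p)^{1/p}`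
attains its maximum over `[0,1]` at `s_p = ((2^p−1)^{1/(p−1)} + 1)^{−1/p}`, which is
the unique zero of `f′` in `(0,1)`. -/
theorem stmt_7 (p : ℝ) (hp1 : 1 < p) (hp2 : p ≤ 2) :
    let sp : ℝ := (((2 : ℝ) ^ p - 1) ^ (1 / (p - 1)) + 1) ^ (-(1 / p))
    let f : ℝ → ℝ := fun s =>
      1 + piP p / 2
        + (∫ z in (0 : ℝ)..s, (z ^ (p ^ 2 - p) * (1 - z ^ p) ^ (1 - p) + 1) ^ (1 / p))
        + 2 * (1 - s ^ p) ^ (1 / p)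
    sp ∈ Set.Ioo (0 : ℝ) 1 ∧
    (∀ s ∈ Set.Icc (0 : ℝ) 1, f s ≤ f sp) ∧
    (∀ s ∈ Set.Ioo (0 : ℝ) 1, deriv f s = 0 ↔ s = sp) := by
  exact stmt_7_general hp1 one_lt_two (1 + piP p / 2)
end

section
/- For every real p ≥ 2, the equation w^p + 1 = 2(1 − w)^p has a unique root w_p in the open interval (0,1). -/
open Real

theorem existsUnique_mem_Ioo_eq_of_continuousOn_of_injOn {α δ : Type*}
    [ConditionallyCompleteLinearOrder α] [TopologicalSpace α] [OrderTopology α] [DenselyOrdered α]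
    [LinearOrder δ] [TopologicalSpace δ] [OrderClosedTopology δ]
    {a b : α} {f : α → δ} {y : δ} (hab : a ≤ b) (hcont : ContinuousOn f (Set.Icc a b))
    (hinj : Set.InjOn f (Set.Ioo a b)) (hy : y ∈ Set.Ioo (f a) (f b)) :
    ∃! x, x ∈ Set.Ioo a b ∧ f x = y := by
  obtain ⟨x, hx, hfx⟩ := intermediate_value_Ioo hab hcont hy
  exact ⟨x, ⟨hx, hfx⟩, fun z ⟨hz, hfz⟩ ↦ hinj hz hx (hfz.trans hfx.symm)⟩

section RpowSubMulOneSubRpow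

variable {p : ℝ}

theorem continuous_rpow_sub_mul_one_sub_rpow (hp : 0 ≤ p) (c : ℝ) :
    Continuous fun w : ℝ ↦ w ^ p - c * (1 - w) ^ p :=
  have hpow : Continuous fun w : ℝ ↦ w ^ p := continuous_rpow_const hp
  hpow.sub ((hpow.comp (continuous_sub_left 1)).const_mul c)

theorem strictMonoOn_rpow_sub_mul_one_sub_rpow {c : ℝ} (hp : 0 < p) (hc : 0 ≤ c) :
    StrictMonoOn (fun w : ℝ ↦ w ^ p - c * (1 - w) ^ p) (Set.Icc 0 1) := by
  intro u hu v hv huv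
  have hpow : u ^ p < v ^ p := rpow_lt_rpow hu.1 huv hp
  have hpow_one_sub : (1 - v) ^ p ≤ (1 - u) ^ p :=
    rpow_le_rpow (sub_nonneg.2 hv.2) (sub_le_sub_left huv.le 1) hp.le
  have hmul : c * (1 - v) ^ p ≤ c * (1 - u) ^ p := mul_le_mul_of_nonneg_left hpow_one_sub hc
  linarith

end RpowSubMulOneSubRpow

theorem stmt_8_general (p : ℝ) (hp : 0 < p) :
    ∃! w : ℝ, w ∈ Set.Ioo (0 : ℝ) 1 ∧ w ^ p + 1 = 2 * (1 - w) ^ p := by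
  let f : ℝ → ℝ := fun w ↦ w ^ p - 2 * (1 - w) ^ p
  have hinj : Set.InjOn f (Set.Ioo 0 1) :=
    (strictMonoOn_rpow_sub_mul_one_sub_rpow hp zero_le_two).injOn.mono Set.Ioo_subset_Icc_self
  have hzero : f 0 = -2 := by simp [f, hp.ne']
  have hone : f 1 = 1 := by simp [f, hp.ne']
  have hmem : -1 ∈ Set.Ioo (f 0) (f 1) := by norm_num [hzero, hone]
  have heq (w : ℝ) : w ^ p + 1 = 2 * (1 - w) ^ p ↔ f w = -1 := by
    rw [← sub_eq_zero, eq_neg_iff_add_eq_zero, add_sub_right_comm]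
  simpa only [heq] using existsUnique_mem_Ioo_eq_of_continuousOn_of_injOn zero_le_one
    (continuous_rpow_sub_mul_one_sub_rpow hp.le 2).continuousOn hinj hmem

/-- For every real `p ≥ 2`, the equation `w^p + 1 = 2(1 − w)^p` has a unique root in
the open interval `(0,1)`. -/
theorem stmt_8 (p : ℝ) (hp : 2 ≤ p) :
    ∃! w : ℝ, w ∈ Set.Ioo (0 : ℝ) 1 ∧ w ^ p + 1 = 2 * (1 - w) ^ p :=
  stmt_8_general p (zero_lt_two.trans_le hp)
end

section
/- For every real p ∈ [2,∞), the function f₂(s) = 1 + 3π_p/4 + ∫_{−1}^s (( −z)^{p²−p}(1−(−z)^p)^{1−p} + 1)^{1/p} dz − 2^{1/p}((1−(−s)^p)^{1/p} + s) has no critical point on (−1, 0): for every s ∈ (−1,0), (1 + (−s)^{p(p−1)}(1−(−s)^p)^{1−p})^{1/p} < 2^{1/p}((−s)^{p−1}(1−(−s)^p)^{(1−p)/p} + 1). In particular, for every w ≥ 0 one has 2(1+w)^p > w^p + 1, so the equation w^p + 1 = 2(1+w)^p has no nonnegative root. -/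
open Real MeasureTheory intervalIntegral

/-!
On `[-1, 0]` the arc `s ↦ (1 - (-s) ^ p) ^ (1 / p)` of the ℓ_p unit circle is an increasing graph.
If `w ≥ 0` is its slope at `s`, the integrand is the ℓ_p length `(w ^ p + 1) ^ (1 / p)` of `(1, w)`,
so the derivative of `f₂` at `s` is `(w ^ p + 1) ^ (1 / p) - 2 ^ (1 / p) * (w + 1)`. Both `w ^ p`
and `1` are at most `(w + 1) ^ p`, the first strictly smaller, so this is negative. The slope may
blow up at `-1`, but it is integrable there, being the derivative of a bounded monotone function,
and a multiple of `w + 1` dominates the integrand.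
-/

theorem rpow_add_rpow_lt_two_mul_add_rpow {x y p : ℝ} (hp : 0 < p) (hx : 0 ≤ x) (hy : 0 < y) :
    x ^ p + y ^ p < 2 * (x + y) ^ p := by
  have hxp : x ^ p < (x + y) ^ p := rpow_lt_rpow hx (by linarith) hp
  have hyp : y ^ p ≤ (x + y) ^ p := rpow_le_rpow hy.le (by linarith) hp.le
  linarith

/-- The ℓ_p speed of a graph `s ↦ (s, g s)` at a point where its slope is `m ≥ 0`. With
`m` written for `|m|`, it is the ℓ_p length of `(1, m)` only for such `m`. -/
noncomputable def graphSpeed (p m : ℝ) : ℝ := (m ^ p + 1) ^ (1 / p)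

theorem graphSpeed_nonneg {p m : ℝ} (hm : 0 ≤ m) : 0 ≤ graphSpeed p m := by
  unfold graphSpeed
  positivity

theorem graphSpeed_lt_two_rpow_mul {p m : ℝ} (hp : 0 < p) (hm : 0 ≤ m) :
    graphSpeed p m < 2 ^ (1 / p) * (m + 1) := by
  have hpow : m ^ p + 1 < 2 * (m + 1) ^ p := by
    simpa only [one_rpow] using rpow_add_rpow_lt_two_mul_add_rpow hp hm one_pos
  calc graphSpeed p m
      < (2 * (m + 1) ^ p) ^ (1 / p) := rpow_lt_rpow (by positivity) hpow (by positivity)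
    _ = 2 ^ (1 / p) * (m + 1) := by
      rw [mul_rpow zero_le_two (by positivity), one_div, rpow_rpow_inv (by positivity) hp.ne']

theorem continuousAt_graphSpeed {p m : ℝ} (hp : 0 < p) (hm : 0 ≤ m) :
    ContinuousAt (graphSpeed p) m :=
  ((continuousAt_id.rpow_const (Or.inr hp.le)).add continuousAt_const).rpow_const
    (Or.inl (add_pos_of_nonneg_of_pos (rpow_nonneg hm p) one_pos).ne')

section Graph

variable {g g' : ℝ → ℝ} {a b p s : ℝ}

theorem integrableOn_graphSpeed (hp : 0 < p) (hcont : ContinuousOn g (Set.Icc a b))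
    (hderiv : ∀ x ∈ Set.Ioo a b, HasDerivAt g (g' x) x) (hnonneg : ∀ x ∈ Set.Ioo a b, 0 ≤ g' x) :
    IntegrableOn (fun z => graphSpeed p (g' z)) (Set.Ioo a b) := by
  have hg' : IntegrableOn g' (Set.Ioo a b) :=
    (integrableOn_deriv_of_nonneg hcont hderiv hnonneg).mono_set Set.Ioo_subset_Ioc_self
  have hbound : IntegrableOn (fun z => 2 ^ (1 / p) * (g' z + 1)) (Set.Ioo a b) :=
    (hg'.add (integrableOn_const (by simp))).const_mul _
  have hmeas : AEStronglyMeasurable (fun z => graphSpeed p (g' z))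
      (volume.restrict (Set.Ioo a b)) :=
    (((hg'.aemeasurable.pow_const p).add_const 1).pow_const (1 / p)).aestronglyMeasurable
  refine hbound.mono' hmeas (ae_restrict_of_forall_mem measurableSet_Ioo fun z hz => ?_)
  rw [norm_of_nonneg (graphSpeed_nonneg (hnonneg z hz))]
  exact (graphSpeed_lt_two_rpow_mul hp (hnonneg z hz)).le

theorem hasDerivAt_integral_graphSpeed (hp : 0 < p) (hcont : ContinuousOn g (Set.Icc a b))
    (hderiv : ∀ x ∈ Set.Ioo a b, HasDerivAt g (g' x) x) (hnonneg : ∀ x ∈ Set.Ioo a b, 0 ≤ g' x)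
    (hs : s ∈ Set.Ioo a b) (hg's : ContinuousAt g' s) :
    HasDerivAt (fun t => ∫ z in a..t, graphSpeed p (g' z)) (graphSpeed p (g' s)) s := by
  have hint := integrableOn_graphSpeed hp hcont hderiv hnonneg
  have hint_left : IntervalIntegrable (fun z => graphSpeed p (g' z)) volume a s :=
    (intervalIntegrable_iff_integrableOn_Ioc_of_le hs.1.le).2
      (hint.mono_set fun z hz => ⟨hz.1, hz.2.trans_lt hs.2⟩)
  exact integral_hasDerivAt_right hint_left
    ⟨Set.Ioo a b, isOpen_Ioo.mem_nhds hs, hint.aestronglyMeasurable⟩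
    ((continuousAt_graphSpeed hp (hnonneg s hs)).comp hg's)

theorem deriv_integral_graphSpeed_sub_neg (hp : 0 < p) (hcont : ContinuousOn g (Set.Icc a b))
    (hderiv : ∀ x ∈ Set.Ioo a b, HasDerivAt g (g' x) x) (hnonneg : ∀ x ∈ Set.Ioo a b, 0 ≤ g' x)
    (hs : s ∈ Set.Ioo a b) (hg's : ContinuousAt g' s) :
    deriv (fun t => (∫ z in a..t, graphSpeed p (g' z)) - 2 ^ (1 / p) * (g t + t)) s < 0 := by
  have hspeed := hasDerivAt_integral_graphSpeed hp hcont hderiv hnonneg hs hg's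
  have hlinear := ((hderiv s hs).fun_add (hasDerivAt_id' s)).const_mul ((2 : ℝ) ^ (1 / p))
  rw [(hspeed.fun_sub hlinear).deriv]
  exact sub_neg.2 (graphSpeed_lt_two_rpow_mul hp (hnonneg s hs))

end Graph

/-- The quarter of the ℓ_p unit circle in the second quadrant, as a graph over `s ∈ [-1, 0]`, where
`|s| = -s`. -/
noncomputable def quarterArc (p s : ℝ) : ℝ := (1 - (-s) ^ p) ^ (1 / p)

/-- The slope of `quarterArc p` at `s ∈ (-1, 0)`, the quantity `w` in terms of which `f₂` is
differentiated. -/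
noncomputable def quarterArcSlope (p s : ℝ) : ℝ := (-s) ^ (p - 1) * (1 - (-s) ^ p) ^ ((1 - p) / p)

section QuarterArc

variable {p s : ℝ}

theorem one_sub_neg_rpow_pos (hp : 0 < p) (hs : s ∈ Set.Ioo (-1 : ℝ) 0) : 0 < 1 - (-s) ^ p :=
  sub_pos.2 (rpow_lt_one (by linarith [hs.2]) (by linarith [hs.1]) hp)

theorem quarterArcSlope_nonneg (hp : 0 < p) (hs : s ∈ Set.Ioo (-1 : ℝ) 0) :
    0 ≤ quarterArcSlope p s :=
  mul_nonneg (rpow_nonneg (by linarith [hs.2]) _) (rpow_nonneg (one_sub_neg_rpow_pos hp hs).le _)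

theorem continuous_quarterArc (hp : 0 < p) : Continuous (quarterArc p) :=
  (continuous_const.sub (continuous_neg.rpow_const fun _ => Or.inr hp.le)).rpow_const
    fun _ => Or.inr (by positivity)

theorem hasDerivAt_quarterArc (hp : 0 < p) (hs : s ∈ Set.Ioo (-1 : ℝ) 0) :
    HasDerivAt (quarterArc p) (quarterArcSlope p s) s := by
  have hneg : -s ≠ 0 := neg_ne_zero.2 hs.2.ne
  have hinner : HasDerivAt (fun t : ℝ => 1 - (-t) ^ p) (p * (-s) ^ (p - 1)) s :=
    (((hasDerivAt_neg s).rpow_const (Or.inl hneg)).const_sub 1).congr_deriv (by ring)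
  refine (hinner.rpow_const (Or.inl (one_sub_neg_rpow_pos hp hs).ne')).congr_deriv ?_
  rw [quarterArcSlope, sub_div, div_self hp.ne']
  field_simp

theorem continuousAt_quarterArcSlope (hp : 0 < p) (hs : s ∈ Set.Ioo (-1 : ℝ) 0) :
    ContinuousAt (quarterArcSlope p) s := by
  have hneg (q : ℝ) : ContinuousAt (fun t : ℝ => (-t) ^ q) s :=
    continuousAt_neg.rpow_const (Or.inl (neg_ne_zero.2 hs.2.ne))
  exact (hneg _).mul
    ((continuousAt_const.sub (hneg p)).rpow_const (Or.inl (one_sub_neg_rpow_pos hp hs).ne'))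

theorem quarterArcSlope_rpow (hp : 0 < p) (hs : s ∈ Set.Ioo (-1 : ℝ) 0) :
    quarterArcSlope p s ^ p = (-s) ^ (p * (p - 1)) * (1 - (-s) ^ p) ^ (1 - p) := by
  have hneg : 0 ≤ -s := by linarith [hs.2]
  have hpos := (one_sub_neg_rpow_pos hp hs).le
  rw [quarterArcSlope, mul_rpow (rpow_nonneg hneg _) (rpow_nonneg hpos _), ← rpow_mul hneg,
    ← rpow_mul hpos, div_mul_cancel₀ _ hp.ne', mul_comm (p - 1)]

theorem graphSpeed_quarterArcSlope (hp : 0 < p) (hs : s ∈ Set.Ioo (-1 : ℝ) 0) :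
    graphSpeed p (quarterArcSlope p s) =
      ((-s) ^ (p * (p - 1)) * (1 - (-s) ^ p) ^ (1 - p) + 1) ^ (1 / p) := by
  rw [graphSpeed, quarterArcSlope_rpow hp hs]

theorem integral_graphSpeed_quarterArcSlope (hp : 0 < p) (hs : s ∈ Set.Ioo (-1 : ℝ) 0) :
    ∫ z in (-1 : ℝ)..s, graphSpeed p (quarterArcSlope p z) =
      ∫ z in (-1 : ℝ)..s, ((-z) ^ (p ^ 2 - p) * (1 - (-z) ^ p) ^ (1 - p) + 1) ^ (1 / p) := by
  refine integral_congr_Ioo_of_le hs.1.le fun z hz => ?_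
  simp only [graphSpeed_quarterArcSlope hp ⟨hz.1, hz.2.trans hs.2⟩, sq, mul_sub_one]

end QuarterArc

theorem stmt_10_general (p : ℝ) (hp : 0 < p) :
    let f₂ : ℝ → ℝ := fun s =>
      1 + 3 * piP p / 4
        + (∫ z in (-1 : ℝ)..s,
            ((-z) ^ (p ^ 2 - p) * (1 - (-z) ^ p) ^ (1 - p) + 1) ^ (1 / p))
        - (2 : ℝ) ^ (1 / p) * ((1 - (-s) ^ p) ^ (1 / p) + s)
    (∀ s ∈ Set.Ioo (-1 : ℝ) 0, deriv f₂ s < 0) ∧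
    (∀ s ∈ Set.Ioo (-1 : ℝ) 0,
      (1 + (-s) ^ (p * (p - 1)) * (1 - (-s) ^ p) ^ (1 - p)) ^ (1 / p)
        < (2 : ℝ) ^ (1 / p) * ((-s) ^ (p - 1) * (1 - (-s) ^ p) ^ ((1 - p) / p) + 1)) ∧
    (∀ w : ℝ, 0 ≤ w → w ^ p + 1 < 2 * (1 + w) ^ p) := by
  intro f₂
  refine ⟨fun s hs => ?_, fun s hs => ?_, fun w hw => ?_⟩
  · have hf₂ : f₂ =ᶠ[nhds s] fun t => (1 + 3 * piP p / 4) +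
        ((∫ z in (-1 : ℝ)..t, graphSpeed p (quarterArcSlope p z)) -
          2 ^ (1 / p) * (quarterArc p t + t)) := by
      filter_upwards [isOpen_Ioo.mem_nhds hs] with t ht
      rw [integral_graphSpeed_quarterArcSlope hp ht, ← add_sub_assoc]
      rfl
    rw [hf₂.deriv_eq, deriv_const_add]
    exact deriv_integral_graphSpeed_sub_neg hp (continuous_quarterArc hp).continuousOn
      (fun _ => hasDerivAt_quarterArc hp) (fun _ => quarterArcSlope_nonneg hp) hs
      (continuousAt_quarterArcSlope hp hs)
  · rw [add_comm, ← graphSpeed_quarterArcSlope hp hs]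
    exact graphSpeed_lt_two_rpow_mul hp (quarterArcSlope_nonneg hp hs)
  · simpa only [one_rpow, add_comm w 1] using rpow_add_rpow_lt_two_mul_add_rpow hp hw one_pos

/-- For `p ∈ [2,∞)`, the function `f₂` has no critical point on `(−1,0)`:
for every `s ∈ (−1,0)` the derivative inequality
`(1 + (−s)^{p(p−1)}(1−(−s)^p)^{1−p})^{1/p} < 2^{1/p}((−s)^{p−1}(1−(−s)^p)^{(1−p)/p} + 1)`
holds. In particular `2(1+w)^p > w^p + 1` for every `w ≥ 0`. -/
theorem stmt_10 (p : ℝ) (hp : 2 ≤ p) :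
    let f₂ : ℝ → ℝ := fun s =>
      1 + 3 * piP p / 4
        + (∫ z in (-1 : ℝ)..s,
            ((-z) ^ (p ^ 2 - p) * (1 - (-z) ^ p) ^ (1 - p) + 1) ^ (1 / p))
        - (2 : ℝ) ^ (1 / p) * ((1 - (-s) ^ p) ^ (1 / p) + s)
    (∀ s ∈ Set.Ioo (-1 : ℝ) 0, deriv f₂ s ≠ 0) ∧
    (∀ s ∈ Set.Ioo (-1 : ℝ) 0,
      (1 + (-s) ^ (p * (p - 1)) * (1 - (-s) ^ p) ^ (1 - p)) ^ (1 / p)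
        < (2 : ℝ) ^ (1 / p) * ((-s) ^ (p - 1) * (1 - (-s) ^ p) ^ ((1 - p) / p) + 1)) ∧
    (∀ w : ℝ, 0 ≤ w → w ^ p + 1 < 2 * (1 + w) ^ p) :=
  have h := stmt_10_general p (by linarith)
  ⟨fun s hs => (h.1 s hs).ne, h.2⟩
end
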